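/- Let ψ be analytic, injective, and with convex image on the unit disk, and let h = Σ_{n≥0} a_n z^n, g = Σ_{n≥1} b_n z^n be analytic on D with h subordinate to ψ (h = ψ ∘ ω for some analytic ω: D → D with ω(0)=0) and |g'(z)| ≤ k|h'(z)| on D, 0 ≤ k ≤ 1. Then for |z| = r ≤ 1/(5+2k): |h(z)| + Σ_{n≥1}(|a_n| + |b_n|) r^n ≤ |ψ(0)| + dist(ψ(0), ∂ψ(D)). -/

import Mathlib

/-!
Let `d` be the distance from `ψ 0` to the boundary of the convex set `Ω = ψ(D)`. By Liouville's
theorem `Ω` is not the whole plane, so a nearest boundary point exists, and a supporting line there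
puts `Ω` in a half-plane: `Re (u (w - ψ 0)) ≤ d` on `Ω` for some unimodular `u`
(`exists_supporting`). As `h` takes its values in `Ω` and `h 0 = ψ 0`, Carathéodory's coefficient
inequality for functions with bounded real part (`caratheodory_coeff`) gives `|a_n| ≤ 2 d` for
`n ≥ 1`. Hence `|h z| ≤ |ψ 0| + 2 d r / (1 - r)` and `∑_{n ≥ 1} |a_n| r ^ n ≤ 2 d r / (1 - r)`.

For the coefficients of `g`, write `g' = Φ h'` with `Φ` holomorphic and `|Φ| ≤ k`
(`exists_quotient`; the zeros of `h'` are removable). Carathéodory's inequality applied to `Φ`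
yields Bohr's theorem `∑ |c_n| r ^ n ≤ k` for `r ≤ 1 / 3` (`bohr_le`), and comparing coefficients
in `g' = Φ h'` gives `∑_{n ≥ 1} |b_n| r ^ n ≤ k ∑_{n ≥ 1} |a_n| r ^ n` (`bohr_majorant`). The three
bounds add up to `|ψ 0| + 2 (2 + k) d r / (1 - r)`, which is at most `|ψ 0| + d` exactly when
`r ≤ 1 / (5 + 2 k)`.
-/

open Filter Topology Metric Complex
open scoped Real Nat

/-! ### Power series on the unit disk -/

theorem hasFPowerSeriesOnBall_of_hasSum {f : ℕ → ℂ} {F : ℂ → ℂ}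
    (hF : ∀ z : ℂ, ‖z‖ < 1 → HasSum (fun n => f n * z ^ n) (F z)) :
    HasFPowerSeriesOnBall F (FormalMultilinearSeries.ofScalars ℂ f) 0 1 where
  r_le := by
    refine ENNReal.le_of_forall_nnreal_lt fun r hr => ?_
    refine FormalMultilinearSeries.le_radius_of_tendsto _ (l := 0) ?_
    have h := (hF (r : ℂ) (by simpa using hr)).summable.tendsto_atTop_zero.norm
    simpa [FormalMultilinearSeries.ofScalars_norm] using h
  r_pos := one_pos
  hasSum := by
    intro y hy
    have hy' : ‖y‖ < 1 := by
      rwa [← ENNReal.ofReal_one, Metric.eball_ofReal, mem_ball_zero_iff] at hy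
    simpa [FormalMultilinearSeries.ofScalars_apply_eq, mul_comm] using hF y hy'

theorem differentiableOn_of_hasSum {f : ℕ → ℂ} {F : ℂ → ℂ}
    (hF : ∀ z : ℂ, ‖z‖ < 1 → HasSum (fun n => f n * z ^ n) (F z)) :
    DifferentiableOn ℂ F (ball 0 1) := by
  have := (hasFPowerSeriesOnBall_of_hasSum hF).differentiableOn
  rwa [← ENNReal.ofReal_one, Metric.eball_ofReal] at this

theorem coeff_unique {f f' : ℕ → ℂ} {F : ℂ → ℂ}
    (hF : ∀ z : ℂ, ‖z‖ < 1 → HasSum (fun n => f n * z ^ n) (F z))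
    (hF' : ∀ z : ℂ, ‖z‖ < 1 → HasSum (fun n => f' n * z ^ n) (F z)) : f = f' := by
  have h := (hasFPowerSeriesOnBall_of_hasSum hF).hasFPowerSeriesAt.eq_formalMultilinearSeries
    (hasFPowerSeriesOnBall_of_hasSum hF').hasFPowerSeriesAt
  exact FormalMultilinearSeries.ofScalars_series_injective ℂ ℂ h

theorem hasSum_of_differentiableOn {F : ℂ → ℂ} (hF : DifferentiableOn ℂ F (ball 0 1)) (z : ℂ)
    (hz : ‖z‖ < 1) : HasSum (fun n => ((n ! : ℂ)⁻¹ * iteratedDeriv n F 0) * z ^ n) (F z) := by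
  convert! hasSum_taylorSeries_on_ball hF (z := z) (by simpa using hz) using 2 with n
  simp only [smul_eq_mul, sub_zero]; ring

theorem hasSum_deriv {f : ℕ → ℂ} {F : ℂ → ℂ}
    (hF : ∀ z : ℂ, ‖z‖ < 1 → HasSum (fun n => f n * z ^ n) (F z)) (z : ℂ) (hz : ‖z‖ < 1) :
    HasSum (fun n : ℕ => ((n + 1 : ℂ) * f (n + 1)) * z ^ n) (deriv F z) := by
  have hd := differentiableOn_of_hasSum hF
  have h1 := hasSum_of_differentiableOn (hd.deriv isOpen_ball) z hz
  have h2 := coeff_unique hF (hasSum_of_differentiableOn hd)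
  convert! h1 using 2 with n
  rw [congrFun h2 (n + 1), ← iteratedDeriv_succ', Nat.factorial_succ]
  have : (n + 1 : ℂ) ≠ 0 := by exact_mod_cast n.succ_ne_zero
  push_cast
  field_simp

theorem summable_norm_coeff {f : ℕ → ℂ} {F : ℂ → ℂ}
    (hF : ∀ z : ℂ, ‖z‖ < 1 → HasSum (fun n => f n * z ^ n) (F z)) {r : ℝ} (h0 : 0 ≤ r)
    (hr : r < 1) : Summable fun n => ‖f n‖ * r ^ n := by
  have h := (hF (r : ℂ) (by simpa [abs_of_nonneg h0] using hr)).summable.norm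
  simpa [abs_of_nonneg h0] using h

/-! ### Carathéodory's coefficient inequality -/

theorem integral_exp_int (m : ℤ) :
    ∫ θ in (0 : ℝ)..2 * π, exp (m * I * θ) = if m = 0 then (2 * π : ℂ) else 0 := by
  split_ifs with h
  · simp [h]
  · have hc : (m * I : ℂ) ≠ 0 := mul_ne_zero (by exact_mod_cast h) I_ne_zero
    rw [integral_exp_mul_complex hc]
    have : exp (m * I * (2 * π : ℝ)) = 1 := by
      rw [Complex.exp_eq_one_iff]; exact ⟨m, by push_cast; ring⟩
    rw [this]; simp

theorem circle_norm {ρ : ℝ} (h0 : 0 ≤ ρ) (θ : ℝ) : ‖(ρ : ℂ) * exp (I * θ)‖ = ρ := by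
  rw [norm_mul, mul_comm I, norm_exp_ofReal_mul_I]; simp [abs_of_nonneg h0]

/-- The `m`-th Fourier integral of `F` on the circle of radius `ρ`, obtained by termwise integration.
The sum has at most one nonzero term, and none when `m < 0`. -/
theorem hasSum_fourier {f : ℕ → ℂ} {F : ℂ → ℂ}
    (hF : ∀ z : ℂ, ‖z‖ < 1 → HasSum (fun n => f n * z ^ n) (F z)) {ρ : ℝ} (h0 : 0 ≤ ρ)
    (hρ : ρ < 1) (m : ℤ) :
    HasSum (fun j : ℕ => f j * ρ ^ j * (if (j : ℤ) - m = 0 then (2 * π : ℂ) else 0))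
      (∫ θ in (0 : ℝ)..2 * π, F (ρ * exp (I * θ)) * exp (-m * I * θ)) := by
  let G : ℕ → C(ℝ, ℂ) := fun j =>
    ⟨fun θ => f j * (ρ * exp (I * θ)) ^ j * exp (-m * I * θ), by fun_prop⟩
  have hn : ∀ j (θ : ℝ), ‖G j θ‖ ≤ ‖f j‖ * ρ ^ j := by
    intro j θ
    have : ‖exp (-m * I * θ)‖ = 1 := by
      have := norm_exp_ofReal_mul_I (-m * θ)
      rw [← this]; congr 2; push_cast; ring
    simp only [G, ContinuousMap.coe_mk]
    rw [norm_mul, this, mul_one, norm_mul, norm_pow, circle_norm h0]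
  have hs := summable_norm_coeff hF h0 hρ
  have key := intervalIntegral.hasSum_intervalIntegral_of_summable_norm (a := 0) (b := 2 * π) (f := G)
    (Summable.of_nonneg_of_le (fun _ => norm_nonneg _)
      (fun j => (ContinuousMap.norm_le _ (by positivity)).2 fun x => hn j x) hs)
  convert! key using 2 with j
  · rw [← integral_exp_int, ← intervalIntegral.integral_const_mul]
    congr 1; ext θ
    simp only [G, ContinuousMap.coe_mk, mul_pow, ← Complex.exp_nat_mul, mul_assoc, ← Complex.exp_add]
    congr 4; push_cast; ring
  · ext θ
    have := (hF (ρ * exp (I * θ)) (by rw [circle_norm h0]; exact hρ)).mul_right (exp (-m * I * θ))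
    exact this.tsum_eq.symm

/-- Carathéodory's coefficient inequality. For `n ≥ 1` the negative Fourier coefficients of `F` and
the `n`-th Fourier coefficient of the constant `M` vanish, so `f n * ρ ^ n` is the `n`-th Fourier
coefficient of `2 (Re F - M) ≤ 0`, whose `L¹` norm is determined by its mean value. -/
theorem caratheodory_coeff {f : ℕ → ℂ} {F : ℂ → ℂ} {M : ℝ}
    (hF : ∀ z : ℂ, ‖z‖ < 1 → HasSum (fun n => f n * z ^ n) (F z))
    (hM : ∀ z : ℂ, ‖z‖ < 1 → (F z).re ≤ M) {n : ℕ} (hn : n ≠ 0) :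
    ‖f n‖ ≤ 2 * (M - (f 0).re) := by
  have main : ∀ ρ : ℝ, 0 ≤ ρ → ρ < 1 → ‖f n‖ * ρ ^ n ≤ 2 * (M - (f 0).re) := by
    intro ρ h0 hρ
    have hcont : Continuous fun θ : ℝ => F (ρ * exp (I * θ)) := by
      refine (differentiableOn_of_hasSum hF).continuousOn.comp_continuous (by fun_prop) ?_
      intro θ; rw [mem_ball_zero_iff, circle_norm h0]; exact hρ
    have e1 : ∫ θ in (0 : ℝ)..2 * π, F (ρ * exp (I * θ)) * exp (-(n : ℤ) * I * θ)
        = f n * ρ ^ n * (2 * π) := by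
      refine (hasSum_fourier hF h0 hρ n).unique ?_
      convert! hasSum_ite_eq n (f n * ρ ^ n * (2 * π)) using 2 with j
      by_cases h : j = n
      · simp [h]
      · simp [h, sub_eq_zero]
    have e2 : ∫ θ in (0 : ℝ)..2 * π, F (ρ * exp (I * θ)) * exp (-(-(n : ℤ) : ℤ) * I * θ) = 0 := by
      refine (hasSum_fourier hF h0 hρ (-n)).unique ?_
      convert! hasSum_zero using 2 with j
      have : ¬ ((j : ℤ) - -(n : ℤ) = 0) := by omega
      rw [if_neg this, mul_zero]
    have e3 : ∫ θ in (0 : ℝ)..2 * π, F (ρ * exp (I * θ)) = f 0 * (2 * π) := by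
      have := (hasSum_fourier hF h0 hρ 0).unique
        (a₂ := f 0 * (2 * π)) ?_
      · simpa using this
      convert! hasSum_ite_eq 0 (f 0 * (2 * π)) using 2 with j
      by_cases h : j = 0
      · simp [h]
      · simp [h]
    have e4 : ∫ θ in (0 : ℝ)..2 * π, exp (-(n : ℤ) * I * θ) = 0 := by
      have := integral_exp_int (-n)
      rw [if_neg (by omega)] at this
      simpa using this
    -- Conjugating `e2` turns it into a statement about `conj F` at the frequency `n`.
    have e2' : ∫ θ in (0 : ℝ)..2 * π,
        (starRingEnd ℂ) (F (ρ * exp (I * θ))) * exp (-(n : ℤ) * I * θ) = 0 := by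
      have := congrArg (starRingEnd ℂ) e2
      rw [map_zero, intervalIntegral.integral_of_le Real.two_pi_pos.le, ← integral_conj,
        ← intervalIntegral.integral_of_le Real.two_pi_pos.le] at this
      rw [← this]
      congr 1; ext θ
      simp only [map_mul, ← Complex.exp_conj, conj_I, conj_ofReal, map_neg, map_intCast]
      congr 2; push_cast; ring
    have e5 : ∫ θ in (0 : ℝ)..2 * π,
        (((2 * ((F (ρ * exp (I * θ))).re - M) : ℝ)) : ℂ) * exp (-(n : ℤ) * I * θ)
        = f n * ρ ^ n * (2 * π) := by
      have : ∀ θ : ℝ, (((2 * ((F (ρ * exp (I * θ))).re - M) : ℝ)) : ℂ) * exp (-(n : ℤ) * I * θ)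
          = (F (ρ * exp (I * θ)) * exp (-(n : ℤ) * I * θ)
            + (starRingEnd ℂ) (F (ρ * exp (I * θ))) * exp (-(n : ℤ) * I * θ))
            - 2 * M * exp (-(n : ℤ) * I * θ) := by
        intro θ
        rw [← add_mul, Complex.add_conj]; push_cast; ring
      simp_rw [this]
      have c1 : Continuous fun θ : ℝ => F (ρ * exp (I * θ)) * exp (-(n : ℤ) * I * θ) :=
        hcont.mul (by fun_prop)
      have c2 : Continuous fun θ : ℝ =>
          (starRingEnd ℂ) (F (ρ * exp (I * θ))) * exp (-(n : ℤ) * I * θ) :=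
        (Complex.continuous_conj.comp hcont).mul (by fun_prop)
      have c3 : Continuous fun θ : ℝ => 2 * M * exp (-(n : ℤ) * I * θ) := by fun_prop
      have i1 := c1.intervalIntegrable (μ := MeasureTheory.volume) 0 (2 * π)
      have i2 := c2.intervalIntegrable (μ := MeasureTheory.volume) 0 (2 * π)
      have i3 := c3.intervalIntegrable (μ := MeasureTheory.volume) 0 (2 * π)
      have hsub := intervalIntegral.integral_sub (i1.add i2) i3
      have hadd := intervalIntegral.integral_add i1 i2
      rw [hsub, hadd, intervalIntegral.integral_const_mul, e1, e2', e4]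
      ring
    have e6 : ∫ θ in (0 : ℝ)..2 * π, 2 * (M - (F (ρ * exp (I * θ))).re)
        = 2 * (M - (f 0).re) * (2 * π) := by
      have hre : ∫ θ in (0 : ℝ)..2 * π, (F (ρ * exp (I * θ))).re = (f 0).re * (2 * π) := by
        have := Complex.reCLM.intervalIntegral_comp_comm (hcont.intervalIntegrable (μ := MeasureTheory.volume) 0 (2 * π))
        simp only [Complex.reCLM_apply] at this
        rw [this, e3]
        simp
      have c4 : Continuous fun θ : ℝ => (F (ρ * exp (I * θ))).re :=
        Complex.continuous_re.comp hcont
      rw [intervalIntegral.integral_const_mul, intervalIntegral.integral_sub (by simp)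
        (c4.intervalIntegrable _ _), hre]
      simp; ring
    have hle : ‖f n * ρ ^ n * (2 * π)‖ ≤ 2 * (M - (f 0).re) * (2 * π) := by
      rw [← e5, ← e6]
      have c5 : Continuous fun θ : ℝ => 2 * (M - (F (ρ * exp (I * θ))).re) := by
        have := Complex.continuous_re.comp hcont
        exact (continuous_const.sub this).const_mul 2
      refine intervalIntegral.norm_integral_le_of_norm_le (by positivity) ?_
        (c5.intervalIntegrable _ _)
      refine MeasureTheory.ae_of_all _ fun θ _ => ?_
      have h1 : ‖exp (-(n : ℤ) * I * θ)‖ = 1 := by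
        have := norm_exp_ofReal_mul_I (-n * θ)
        rw [← this]; congr 2; push_cast; ring
      rw [norm_mul, h1, mul_one, Complex.norm_real, Real.norm_eq_abs, abs_le]
      have := hM (ρ * exp (I * θ)) (by rw [circle_norm h0]; exact hρ)
      constructor <;> linarith
    have hpi : (0 : ℝ) < 2 * π := by positivity
    have : ‖f n * ρ ^ n * (2 * π)‖ = ‖f n‖ * ρ ^ n * (2 * π) := by
      simp [abs_of_nonneg h0, abs_of_nonneg Real.pi_pos.le]
    rw [this] at hle
    exact le_of_mul_le_mul_right hle hpi
  have hlim : Tendsto (fun ρ : ℝ => ‖f n‖ * ρ ^ n) (𝓝[<] 1) (𝓝 (‖f n‖ * 1 ^ n)) :=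
    ((continuous_const.mul (continuous_id.pow n)).tendsto 1).mono_left nhdsWithin_le_nhds
  have := le_of_tendsto hlim (b := 2 * (M - (f 0).re)) <| by
    filter_upwards [Ioo_mem_nhdsLT (show (0 : ℝ) < 1 by norm_num)] with ρ h
    exact main ρ h.1.le h.2
  simpa using this

/-! ### Bohr's theorem and majorization of derivatives -/

theorem tail_le {f : ℕ → ℂ} {C r : ℝ} (hf : ∀ n, ‖f (n + 1)‖ ≤ C) (h0 : 0 ≤ r) (hr : r < 1) :
    ∑' n, ‖f (n + 1)‖ * r ^ (n + 1) ≤ C * (r / (1 - r)) := by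
  have hg : HasSum (fun n : ℕ => C * (r * r ^ n)) (C * (r * (1 - r)⁻¹)) :=
    ((hasSum_geometric_of_lt_one h0 hr).mul_left r).mul_left C
  have hle : ∀ n, ‖f (n + 1)‖ * r ^ (n + 1) ≤ C * (r * r ^ n) := fun n => by
    rw [pow_succ' r n]; exact mul_le_mul_of_nonneg_right (hf n) (by positivity)
  have hs := Summable.of_nonneg_of_le (fun n => by positivity) hle hg.summable
  calc _ ≤ _ := hs.tsum_le_tsum hle hg.summable
    _ = _ := by rw [hg.tsum_eq, div_eq_mul_inv]

theorem exists_rotation (w : ℂ) : ∃ u : ℂ, ‖u‖ = 1 ∧ u * w = ‖w‖ := by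
  by_cases hw : w = 0
  · exact ⟨1, by simp, by simp [hw]⟩
  · have hn : (‖w‖ : ℂ) ≠ 0 := by simpa using hw
    refine ⟨(starRingEnd ℂ) w / ‖w‖, by simp [hw], ?_⟩
    rw [div_mul_eq_mul_div, mul_comm, Complex.mul_conj']
    field_simp

/-- Bohr's theorem with bound `k`: rotating `Φ` so that its constant term is nonnegative,
Carathéodory's inequality gives `‖c n‖ ≤ 2 (k - ‖c 0‖)` for `n ≥ 1`, and `2 r / (1 - r) ≤ 1`. -/
theorem bohr_le {c : ℕ → ℂ} {Φ : ℂ → ℂ} {k r : ℝ}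
    (hΦ : ∀ z : ℂ, ‖z‖ < 1 → HasSum (fun n => c n * z ^ n) (Φ z))
    (hk : ∀ z : ℂ, ‖z‖ < 1 → ‖Φ z‖ ≤ k) (h0 : 0 ≤ r) (hr : r ≤ 1 / 3) :
    ∑' n, ‖c n‖ * r ^ n ≤ k := by
  obtain ⟨u, hu, huc⟩ := exists_rotation (c 0)
  have hcoeff : ∀ n, ‖c (n + 1)‖ ≤ 2 * (k - ‖c 0‖) := fun n => by
    have := caratheodory_coeff (f := fun n => u * c n) (F := fun z => u * Φ z) (M := k)
      (fun z hz => by simpa only [mul_assoc] using (hΦ z hz).mul_left u)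
      (fun z hz => (Complex.re_le_norm _).trans (by rw [norm_mul, hu, one_mul]; exact hk z hz))
      n.succ_ne_zero
    simpa only [norm_mul, hu, one_mul, huc, Complex.ofReal_re] using this
  have hpos : 0 ≤ k - ‖c 0‖ := by have := (norm_nonneg _).trans (hcoeff 0); linarith
  have ht := tail_le hcoeff h0 (by linarith)
  have hfrac : r / (1 - r) ≤ 1 / 2 := by
    rw [div_le_div_iff₀ (by linarith) (by norm_num)]; linarith
  rw [(summable_norm_coeff hΦ h0 (by linarith)).tsum_eq_zero_add]
  have := mul_le_mul_of_nonneg_left hfrac (show 0 ≤ 2 * (k - ‖c 0‖) by linarith)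
  simp only [pow_zero, mul_one]
  linarith

/-- If `‖q‖ ≤ k ‖p‖` on the disk, then `q = Φ p` with `Φ` holomorphic and bounded by `k`. Taking
`Φ z` to be the limit of `q / p` on the punctured neighbourhoods of `z` removes all the
singularities at once. -/
theorem exists_quotient {p q : ℂ → ℂ} {k : ℝ} (hk : 0 ≤ k) (hp : DifferentiableOn ℂ p (ball 0 1))
    (hq : DifferentiableOn ℂ q (ball 0 1)) (hle : ∀ z ∈ ball (0 : ℂ) 1, ‖q z‖ ≤ k * ‖p z‖) :
    ∃ Φ : ℂ → ℂ, DifferentiableOn ℂ Φ (ball 0 1) ∧ (∀ z ∈ ball (0 : ℂ) 1, ‖Φ z‖ ≤ k) ∧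
      ∀ z ∈ ball (0 : ℂ) 1, q z = Φ z * p z := by
  have hpa : AnalyticOnNhd ℂ p (ball 0 1) := hp.analyticOnNhd isOpen_ball
  by_cases hz : ∃ z ∈ ball (0 : ℂ) 1, ∃ᶠ w in 𝓝[≠] z, p w = 0
  · obtain ⟨z, hzb, hzf⟩ := hz
    have h0 := hpa.eqOn_zero_of_preconnected_of_frequently_eq_zero
      (convex_ball (0 : ℂ) 1).isPreconnected hzb hzf
    refine ⟨0, differentiableOn_const 0, fun _ _ => by simpa using hk, fun w hw => ?_⟩
    have := hle w hw
    rw [h0 hw] at this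
    simpa using this
  · push Not at hz
    let Q : ℂ → ℂ := fun z => q z / p z
    let Φ : ℂ → ℂ := fun z => limUnder (𝓝[≠] z) Q
    have hQd : ∀ z ∈ ball (0 : ℂ) 1, p z ≠ 0 → DifferentiableAt ℂ Q z := fun z hz hpz =>
      (hq.differentiableAt (isOpen_ball.mem_nhds hz)).div
        (hp.differentiableAt (isOpen_ball.mem_nhds hz)) hpz
    have hΦQ : ∀ z ∈ ball (0 : ℂ) 1, p z ≠ 0 → Φ z = Q z := fun z hz hpz =>
      ((hQd z hz hpz).continuousAt.tendsto.mono_left nhdsWithin_le_nhds).limUnder_eq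
    have hQk : ∀ z ∈ ball (0 : ℂ) 1, ‖Q z‖ ≤ k := fun z hz => by
      by_cases h : p z = 0
      · simpa [Q, h] using hk
      · simp only [Q, norm_div]
        rw [div_le_iff₀ (norm_pos_iff.2 h)]
        exact hle z hz
    have hΦa : ∀ z ∈ ball (0 : ℂ) 1, DifferentiableAt ℂ Φ z := by
      intro z hzb
      have hev : ∀ᶠ w in 𝓝[≠] z, w ∈ ball (0 : ℂ) 1 ∧ p w ≠ 0 :=
        (eventually_nhdsWithin_of_eventually_nhds (isOpen_ball.mem_nhds hzb)).and
          (by simpa [not_frequently] using hz z hzb)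
      obtain ⟨s, hs, hsub⟩ := (eventually_nhdsWithin_iff.1 hev).exists_mem
      have hd : DifferentiableOn ℂ Q (s \ {z}) := fun w hw =>
        (hQd w (hsub w hw.1 hw.2).1 (hsub w hw.1 hw.2).2).differentiableWithinAt
      have hb : BddAbove (norm ∘ Q '' (s \ {z})) := by
        refine ⟨k, ?_⟩
        rintro _ ⟨w, hw, rfl⟩
        exact hQk w (hsub w hw.1 hw.2).1
      have hu := (differentiableOn_update_limUnder_of_bddAbove hs hd hb).differentiableAt hs
      refine hu.congr_of_eventuallyEq ?_
      filter_upwards [hs] with w hw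
      by_cases hwz : w = z
      · subst hwz; simp [Φ]
      · rw [Function.update_of_ne hwz, hΦQ w (hsub w hw hwz).1 (hsub w hw hwz).2]
    refine ⟨Φ, fun z hzb => (hΦa z hzb).differentiableWithinAt, fun z hzb => ?_, fun z hzb => ?_⟩
    · have hev : ∀ᶠ w in 𝓝[≠] z, ‖Φ w‖ ≤ k := by
        filter_upwards [eventually_nhdsWithin_of_eventually_nhds (isOpen_ball.mem_nhds hzb),
          (show ∀ᶠ w in 𝓝[≠] z, p w ≠ 0 by simpa [not_frequently] using hz z hzb)] with w hw hpw
        rw [hΦQ w hw hpw]; exact hQk w hw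
      exact le_of_tendsto
        ((hΦa z hzb).continuousAt.norm.tendsto.mono_left nhdsWithin_le_nhds) hev
    · by_cases h : p z = 0
      · have := hle z hzb
        rw [h] at this ⊢
        simpa using this
      · rw [hΦQ z hzb h]; simp only [Q]; field_simp

/-- Majorization of derivatives carries over to the Bohr sums for `r ≤ 1 / 3`. In
`(n + 1) b_{n+1} = ∑_{i + j = n} c_i (j + 1) a_{j+1}` the factors `(j + 1) / (n + 1)` are at most `1`,
so the Bohr sum of `g` is at most the product of those of `Φ = g' / h'` and `h`. -/
theorem bohr_majorant {a b : ℕ → ℂ} {h g : ℂ → ℂ} {k r : ℝ} (hk : 0 ≤ k)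
    (hh : ∀ z : ℂ, ‖z‖ < 1 → HasSum (fun n => a n * z ^ n) (h z))
    (hg : ∀ z : ℂ, ‖z‖ < 1 → HasSum (fun n => b n * z ^ n) (g z))
    (hdil : ∀ z : ℂ, ‖z‖ < 1 → ‖deriv g z‖ ≤ k * ‖deriv h z‖) (h0 : 0 ≤ r) (hr : r ≤ 1 / 3) :
    ∑' n, ‖b (n + 1)‖ * r ^ (n + 1) ≤ k * ∑' n, ‖a (n + 1)‖ * r ^ (n + 1) := by
  have hr1 : r < 1 := by linarith
  obtain ⟨Φ, hΦd, hΦk, hΦ⟩ := exists_quotient hk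
    ((differentiableOn_of_hasSum hh).deriv isOpen_ball)
    ((differentiableOn_of_hasSum hg).deriv isOpen_ball) (fun z hz => hdil z (by simpa using hz))
  obtain ⟨c, hc⟩ : ∃ c : ℕ → ℂ, ∀ z : ℂ, ‖z‖ < 1 → HasSum (fun n => c n * z ^ n) (Φ z) :=
    ⟨_, hasSum_of_differentiableOn hΦd⟩
  have hprod : ∀ z : ℂ, ‖z‖ < 1 → HasSum (fun n => (∑ ij ∈ Finset.HasAntidiagonal.antidiagonal n,
      c ij.1 * ((ij.2 + 1 : ℂ) * a (ij.2 + 1))) * z ^ n) (deriv g z) := by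
    intro z hz
    have s1 := (hc z hz).summable.norm
    have s2 := (hasSum_deriv hh z hz).summable.norm
    have hs := (summable_norm_sum_mul_antidiagonal_of_summable_norm s1 s2).of_norm.hasSum
    rw [← tsum_mul_tsum_eq_tsum_sum_antidiagonal_of_summable_norm s1 s2, (hc z hz).tsum_eq,
      (hasSum_deriv hh z hz).tsum_eq, ← hΦ z (by simpa using hz)] at hs
    convert! hs using 2 with n
    rw [Finset.sum_mul]
    refine Finset.sum_congr rfl fun ij hij => ?_
    rw [← Finset.HasAntidiagonal.mem_antidiagonal.1 hij, pow_add]; ring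
  have hcoef := fun n => congrFun (coeff_unique (hasSum_deriv hg) hprod) n
  have s1 : Summable fun n => ‖c n‖ * r ^ n := summable_norm_coeff hc h0 hr1
  have s2 : Summable fun n => ‖a (n + 1)‖ * r ^ (n + 1) :=
    (summable_nat_add_iff 1).2 (summable_norm_coeff hh h0 hr1)
  have hterm : ∀ n, ‖b (n + 1)‖ * r ^ (n + 1) ≤ ∑ ij ∈ Finset.HasAntidiagonal.antidiagonal n,
      (‖c ij.1‖ * r ^ ij.1) * (‖a (ij.2 + 1)‖ * r ^ (ij.2 + 1)) := by
    intro n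
    have hn : (0 : ℝ) < n + 1 := by positivity
    have h1 : (n + 1 : ℝ) * ‖b (n + 1)‖ ≤
        ∑ ij ∈ Finset.HasAntidiagonal.antidiagonal n, (n + 1 : ℝ) * (‖c ij.1‖ * ‖a (ij.2 + 1)‖) := by
      have e : ‖((n : ℂ) + 1) * b (n + 1)‖ = (n + 1 : ℝ) * ‖b (n + 1)‖ := by
        rw [norm_mul]; congr 1; exact_mod_cast Complex.norm_natCast (n + 1)
      rw [← e, hcoef n]
      refine (norm_sum_le _ _).trans (Finset.sum_le_sum fun ij hij => ?_)
      have e2 : ‖((ij.2 : ℂ) + 1)‖ = (ij.2 + 1 : ℝ) := by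
        exact_mod_cast Complex.norm_natCast (ij.2 + 1)
      rw [norm_mul, norm_mul, e2]
      have : (ij.2 : ℝ) ≤ n := by
        have := Finset.HasAntidiagonal.mem_antidiagonal.1 hij
        exact_mod_cast (by omega : ij.2 ≤ n)
      have := mul_le_mul_of_nonneg_right (add_le_add_left this 1)
        (show 0 ≤ ‖c ij.1‖ * ‖a (ij.2 + 1)‖ by positivity)
      linarith
    rw [← Finset.mul_sum] at h1
    have h2 := mul_le_mul_of_nonneg_right (le_of_mul_le_mul_left h1 hn)
      (show 0 ≤ r ^ (n + 1) by positivity)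
    refine h2.trans_eq ?_
    rw [Finset.sum_mul]
    refine Finset.sum_congr rfl fun ij hij => ?_
    rw [← Finset.HasAntidiagonal.mem_antidiagonal.1 hij, add_assoc, pow_add]; ring
  have n1 : Summable fun n => ‖‖c n‖ * r ^ n‖ := s1.norm
  have n2 : Summable fun n => ‖‖a (n + 1)‖ * r ^ (n + 1)‖ := s2.norm
  have s3 := (summable_norm_sum_mul_antidiagonal_of_summable_norm n1 n2).of_norm
  have s4 : Summable fun n => ‖b (n + 1)‖ * r ^ (n + 1) :=
    Summable.of_nonneg_of_le (fun n => by positivity) hterm s3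
  calc _ ≤ _ := s4.tsum_le_tsum hterm s3
    _ = (∑' n, ‖c n‖ * r ^ n) * ∑' n, ‖a (n + 1)‖ * r ^ (n + 1) :=
      (tsum_mul_tsum_eq_tsum_sum_antidiagonal_of_summable_norm n1 n2).symm
    _ ≤ _ := mul_le_mul_of_nonneg_right
      (bohr_le hc (fun z hz => hΦk z (by simpa using hz)) h0 hr)
      (tsum_nonneg fun n => by positivity)

/-! ### The supporting half-plane of the image -/

theorem image_isOpen {ψ : ℂ → ℂ} (hψ : AnalyticOnNhd ℂ ψ (ball (0 : ℂ) 1))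
    (hinj : Set.InjOn ψ (ball (0 : ℂ) 1)) :
    ∀ s ⊆ ball (0 : ℂ) 1, IsOpen s → IsOpen (ψ '' s) := by
  refine (hψ.is_constant_or_isOpen (convex_ball (0 : ℂ) 1).isPreconnected).resolve_left ?_
  rintro ⟨w, hw⟩
  have h0 : (0 : ℂ) ∈ ball (0 : ℂ) 1 := by simp
  have h1 : (1 / 2 : ℂ) ∈ ball (0 : ℂ) 1 := by simp; norm_num
  have := hinj h0 h1 ((hw _ h0).trans (hw _ h1).symm)
  norm_num at this

/-- An injective holomorphic function on the disk is not onto `ℂ`: its inverse would be continuous,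
holomorphic off the isolated images of the zeros of `deriv ψ`, hence entire and bounded. -/
theorem image_ne_univ {ψ : ℂ → ℂ} (hψ : AnalyticOnNhd ℂ ψ (ball (0 : ℂ) 1))
    (hinj : Set.InjOn ψ (ball (0 : ℂ) 1)) : ψ '' ball (0 : ℂ) 1 ≠ Set.univ := by
  intro huniv
  have hsurj : ∀ w, ∃ z ∈ ball (0 : ℂ) 1, ψ z = w := fun w => by
    have : w ∈ ψ '' ball (0 : ℂ) 1 := huniv ▸ Set.mem_univ w
    exact this
  choose f hfb hf using hsurj
  have hleft : ∀ z ∈ ball (0 : ℂ) 1, f (ψ z) = z := fun z hz => hinj (hfb _) hz (hf _)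
  have hcont : Continuous f := by
    rw [continuous_iff_continuousAt]
    intro w U hU
    obtain ⟨V, hVU, hVo, hwV⟩ := _root_.mem_nhds_iff.1 (inter_mem hU (isOpen_ball.mem_nhds (hfb w)))
    refine mem_map.2 (mem_of_superset ((image_isOpen hψ hinj V (fun z hz => (hVU hz).2) hVo).mem_nhds
      ⟨f w, hwV, hf w⟩) ?_)
    rintro _ ⟨z, hz, rfl⟩
    rw [Set.mem_preimage, hleft z (hVU hz).2]
    exact (hVU hz).1
  have hψ' : AnalyticOnNhd ℂ (deriv ψ) (ball (0 : ℂ) 1) := hψ.deriv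
  have hne : ∀ z ∈ ball (0 : ℂ) 1, ∀ᶠ w in 𝓝[≠] z, deriv ψ w ≠ 0 := by
    by_contra! hcon
    obtain ⟨z, hzb, hzf⟩ := hcon
    have h0 := hψ'.eqOn_zero_of_preconnected_of_frequently_eq_zero
      (convex_ball (0 : ℂ) 1).isPreconnected hzb (by simpa [not_eventually] using hzf)
    have hc : ψ 0 = ψ (1 / 2) := isOpen_ball.is_const_of_deriv_eq_zero
      (convex_ball (0 : ℂ) 1).isPreconnected hψ.differentiableOn h0 (by simp) (by simp; norm_num)
    have := hinj (by simp) (by simp; norm_num) hc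
    norm_num at this
  have hdiff : Differentiable ℂ f := by
    intro w
    refine (analyticAt_of_differentiable_on_punctured_nhds_of_continuousAt ?_
      hcont.continuousAt).differentiableAt
    have hfinj : Function.Injective f := fun x y hxy => by rw [← hf x, ← hf y, hxy]
    have ht : Tendsto f (𝓝[≠] w) (𝓝[≠] (f w)) :=
      tendsto_nhdsWithin_iff.2 ⟨hcont.continuousAt.tendsto.mono_left nhdsWithin_le_nhds,
        eventually_nhdsWithin_of_forall fun x hx => hfinj.ne hx⟩
    filter_upwards [ht.eventually (hne (f w) (hfb w))] with x hx
    exact (HasDerivAt.of_local_left_inverse hcont.continuousAt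
      (hψ _ (hfb x)).differentiableAt.hasDerivAt hx (Eventually.of_forall hf)).differentiableAt
  have hb : Bornology.IsBounded (Set.range f) :=
    isBounded_ball.subset (Set.range_subset_iff.2 hfb)
  have hc := hdiff.apply_eq_apply_of_bounded hb (ψ 0) (ψ (1 / 2))
  rw [hleft 0 (by simp), hleft (1 / 2) (by simp; norm_num)] at hc
  norm_num at hc

/-- A convex open proper subset of `ℂ` lies in a half-plane whose boundary line is at distance
`infDist p (frontier Ω)` from `p`: take a supporting line at the frontier point nearest to `p`. -/
theorem exists_supporting {Ω : Set ℂ} (ho : IsOpen Ω) (hc : Convex ℝ Ω) (hne : Ω ≠ Set.univ)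
    {p : ℂ} (hp : p ∈ Ω) :
    ∃ u : ℂ, ‖u‖ = 1 ∧ ∀ w ∈ Ω, (u * (w - p)).re ≤ infDist p (frontier Ω) := by
  have hfr : (frontier Ω).Nonempty := by
    rw [nonempty_frontier_iff]; exact ⟨⟨p, hp⟩, hne⟩
  obtain ⟨q, hq, hd⟩ := isClosed_frontier.exists_infDist_eq_dist hfr p
  have hqΩ : q ∉ Ω := by rw [ho.frontier_eq] at hq; exact hq.2
  obtain ⟨L, hL⟩ := RCLike.geometric_hahn_banach_open_point (𝕜 := ℂ) hc ho hqΩ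
  have hLz : ∀ z, L z = L 1 * z := fun z => by
    have := L.map_smul z 1
    simpa [mul_comm] using this
  have hL1 : L 1 ≠ 0 := fun h => by
    have := hL p hp
    rw [hLz p, hLz q, h] at this
    simp at this
  have hn : 0 < ‖L 1‖ := norm_pos_iff.2 hL1
  refine ⟨L 1 / ‖L 1‖, by simp [hL1], fun w hw => ?_⟩
  have h1 : (L 1 * (w - p)).re ≤ ‖L 1‖ * infDist p (frontier Ω) := by
    have h2 := hL w hw
    rw [hLz w, hLz q] at h2
    simp only [RCLike.re_to_complex] at h2
    have h3 : (L 1 * (q - p)).re ≤ ‖L 1‖ * dist p q := by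
      rw [dist_comm, dist_eq_norm, ← norm_mul]; exact Complex.re_le_norm _
    rw [hd]
    rw [mul_sub, Complex.sub_re] at h3 ⊢
    linarith
  have : L 1 / ‖L 1‖ * (w - p) = ((‖L 1‖⁻¹ : ℝ) : ℂ) * (L 1 * (w - p)) := by
    push_cast; ring
  rw [this, Complex.re_ofReal_mul, inv_mul_le_iff₀ hn]
  exact h1

/-! ### The Bohr-Rogosinski inequality -/

/-- Bohr-Rogosinski inequality for subordination to convex univalent maps. -/
theorem subordination_convex_bohr_rogosinski (ψ ω h g : ℂ → ℂ) (a b : ℕ → ℂ) (k : ℝ)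
    (hk0 : 0 ≤ k) (hk1 : k ≤ 1)
    (hψ : AnalyticOnNhd ℂ ψ (Metric.ball (0 : ℂ) 1))
    (hψinj : Set.InjOn ψ (Metric.ball (0 : ℂ) 1))
    (hψconv : Convex ℝ (ψ '' Metric.ball (0 : ℂ) 1))
    (hω : AnalyticOnNhd ℂ ω (Metric.ball (0 : ℂ) 1))
    (hωmap : ∀ z : ℂ, ‖z‖ < 1 → ‖ω z‖ < 1) (hω0 : ω 0 = 0)
    (hsub : ∀ z : ℂ, ‖z‖ < 1 → h z = ψ (ω z))
    (hh : ∀ z : ℂ, ‖z‖ < 1 → HasSum (fun n => a n * z ^ n) (h z))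
    (hg : ∀ z : ℂ, ‖z‖ < 1 → HasSum (fun n => b n * z ^ n) (g z))
    (hb0 : b 0 = 0)
    (hdil : ∀ z : ℂ, ‖z‖ < 1 → ‖deriv g z‖ ≤ k * ‖deriv h z‖)
    (r : ℝ) (hr0 : 0 ≤ r) (hr : r ≤ 1 / (5 + 2 * k)) (z : ℂ) (hz : ‖z‖ = r) :
    ‖h z‖ + ∑' n : ℕ, (‖a (n + 1)‖ + ‖b (n + 1)‖) * r ^ (n + 1) ≤
      ‖ψ 0‖ + Metric.infDist (ψ 0) (frontier (ψ '' Metric.ball (0 : ℂ) 1)) := by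
  have hr5 : r * (5 + 2 * k) ≤ 1 := (le_div_iff₀ (by linarith)).1 hr
  have hr3 : r ≤ 1 / 3 := by nlinarith [mul_nonneg hr0 hk0]
  have hr1 : r < 1 := by linarith
  have ha0 : a 0 = ψ 0 := by
    have h1 := hh 0 (by simp)
    have h2 : HasSum (fun n => a n * (0 : ℂ) ^ n) (a 0) := by
      simpa using hasSum_single (f := fun n => a n * (0 : ℂ) ^ n) 0 (fun n hn => by simp [hn])
    rw [h2.unique h1, hsub 0 (by simp), hω0]
  obtain ⟨u, hu, hΩ⟩ := exists_supporting (image_isOpen hψ hψinj _ subset_rfl isOpen_ball) hψconv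
    (image_ne_univ hψ hψinj) (p := ψ 0) ⟨0, by simp, rfl⟩
  set d := infDist (ψ 0) (frontier (ψ '' ball (0 : ℂ) 1))
  have hcoeff : ∀ n, ‖a (n + 1)‖ ≤ 2 * d := fun n => by
    have := caratheodory_coeff (f := fun n => u * a n) (F := fun z => u * h z)
      (M := d + (u * a 0).re)
      (fun z hz => by simpa only [mul_assoc] using (hh z hz).mul_left u)
      (fun z hz => by
        have := hΩ (h z) ⟨ω z, by simpa using hωmap z hz, (hsub z hz).symm⟩
        rw [mul_sub, Complex.sub_re, ← ha0] at this
        linarith)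
      n.succ_ne_zero
    simpa only [norm_mul, hu, one_mul, add_sub_cancel_right] using this
  have hd0 : 0 ≤ d := infDist_nonneg
  have hA := tail_le hcoeff hr0 hr1
  have hB := bohr_majorant hk0 hh hg hdil hr0 hr3
  have sa : Summable fun n => ‖a (n + 1)‖ * r ^ (n + 1) :=
    (summable_nat_add_iff 1).2 (summable_norm_coeff hh hr0 hr1)
  have sb : Summable fun n => ‖b (n + 1)‖ * r ^ (n + 1) :=
    (summable_nat_add_iff 1).2 (summable_norm_coeff hg hr0 hr1)
  have hhz : ‖h z‖ ≤ ‖ψ 0‖ + ∑' n, ‖a (n + 1)‖ * r ^ (n + 1) := by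
    have hzs := hh z (by rw [hz]; exact hr1)
    have hn := summable_norm_coeff hh hr0 hr1
    calc ‖h z‖ ≤ ∑' n, ‖a n‖ * r ^ n := by
          rw [← hzs.tsum_eq]
          refine tsum_of_norm_bounded hn.hasSum fun n => ?_
          rw [norm_mul, norm_pow, hz]
      _ = _ := by rw [hn.tsum_eq_zero_add, pow_zero, mul_one, ha0]
  simp_rw [add_mul]
  rw [sa.tsum_add sb]
  have hkA := mul_le_mul_of_nonneg_left hA hk0
  -- `4 r / (1 - r) + 2 k r / (1 - r) ≤ 1` is exactly `r ≤ 1 / (5 + 2 k)`.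
  have hfin : (2 + k) * (2 * d * (r / (1 - r))) ≤ d := by
    have : (2 + k) * 2 * (r / (1 - r)) ≤ 1 := by
      rw [← mul_div_assoc, div_le_one (by linarith)]; linarith
    calc _ = d * ((2 + k) * 2 * (r / (1 - r))) := by ring
      _ ≤ d * 1 := mul_le_mul_of_nonneg_left this hd0
      _ = d := mul_one d
  linarith
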